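/- arXiv:2605.27244 — 2 statements merged into one kernel-verified Lean document; each statement's English description precedes it below -/
import Mathlib

section
/- Let X be a spectral topological space with only finitely many closed points. If M ∈ X is a closed point which is weakly visible (i.e., {M} = Y₁ ∩ (X \ Y₂) for some Thomason subsets Y₁, Y₂ of X), then M is visible; more precisely, {M} is itself a Thomason subset of X, i.e., {M} is closed and X \ {M} is a quasi-compact open subset of X. -/
/-- A subset of a topological space is *Thomason* if it is a (possibly infinite) union of
closed subsets each of which has quasi-compact complement. -/
def IsThomason {X : Type*} [TopologicalSpace X] (Y : Set X) : Prop :=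
  ∃ S : Set (Set X), (∀ C ∈ S, IsClosed C ∧ IsCompact Cᶜ) ∧ Y = ⋃₀ S

/-- A topological space is *spectral* if it is quasi-compact, T0, sober, and its
quasi-compact open subsets form a basis of the topology that is stable under
finite intersections. -/
def IsSpectralSpace (X : Type*) [TopologicalSpace X] : Prop :=
  CompactSpace X ∧ T0Space X ∧ QuasiSober X ∧
    TopologicalSpace.IsTopologicalBasis {U : Set X | IsOpen U ∧ IsCompact U} ∧
    ∀ U V : Set X, IsOpen U → IsCompact U → IsOpen V → IsCompact V → IsCompact (U ∩ V)

/-!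
Every point of a compact T₀ space specializes to a closed point. Hence a specialization-closed set
lies in every open set containing its closed points, and it is quasi-compact if it has only
finitely many of them. If `{M} = Y₁ ∩ Y₂ᶜ` with `Y₁`, `Y₂` Thomason, pick a closed set `C` with
quasi-compact complement and `M ∈ C ⊆ Y₁`. Then `{M}ᶜ = Cᶜ ∪ Y₂` is a union of two
quasi-compact sets.
-/

section

variable {X : Type*} [TopologicalSpace X]

lemma isCompact_of_subset_of_subset_nhdsKer {s t : Set X} (ht : IsCompact t) (hts : t ⊆ s)
    (hst : s ⊆ nhdsKer t) : IsCompact s := by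
  have nhdsKer_eq : nhdsKer s = nhdsKer t :=
    ((nhdsKer_mono hst).trans (nhdsKer_nhdsKer t).subset).antisymm (nhdsKer_mono hts)
  rw [← IsCompact.nhdsKer_iff, nhdsKer_eq]
  exact ht.nhdsKer

lemma exists_specializes_isClosed_singleton [CompactSpace X] [T0Space X] (x : X) :
    ∃ y, x ⤳ y ∧ IsClosed ({y} : Set X) := by
  obtain ⟨y, hy_mem, hy_closed⟩ :=
    (isClosed_closure (s := {x})).exists_closed_singleton (Set.singleton_nonempty x).closure
  exact ⟨y, specializes_iff_mem_closure.2 hy_mem, hy_closed⟩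

lemma isCompact_of_stableUnderSpecialization_of_finite [CompactSpace X] [T0Space X] {s : Set X}
    (hs : StableUnderSpecialization s) (hfin : {x ∈ s | IsClosed ({x} : Set X)}.Finite) :
    IsCompact s := by
  refine isCompact_of_subset_of_subset_nhdsKer hfin.isCompact (Set.sep_subset _ _) fun x hx ↦ ?_
  obtain ⟨y, hxy, hy⟩ := exists_specializes_isClosed_singleton x
  exact mem_nhdsKer_iff_specializes.2 ⟨y, ⟨hs hxy hx, hy⟩, hxy⟩

lemma isThomason_of_isClosed_of_isCompact_compl {C : Set X} (hC : IsClosed C)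
    (hC' : IsCompact Cᶜ) : IsThomason C :=
  ⟨{C}, by simp [hC, hC'], by simp⟩

namespace IsThomason

variable {Y : Set X}

lemma stableUnderSpecialization (hY : IsThomason Y) : StableUnderSpecialization Y := by
  obtain ⟨S, hS, rfl⟩ := hY
  exact stableUnderSpecialization_sUnion S fun C hC ↦ (hS C hC).1.stableUnderSpecialization

lemma exists_mem_subset_isCompact_compl (hY : IsThomason Y) {x : X} (hx : x ∈ Y) :
    ∃ C, x ∈ C ∧ C ⊆ Y ∧ IsCompact Cᶜ := by
  obtain ⟨S, hS, rfl⟩ := hY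
  obtain ⟨C, hCS, hxC⟩ := hx
  exact ⟨C, hxC, Set.subset_sUnion_of_mem hCS, (hS C hCS).2⟩

end IsThomason

end

lemma compl_singleton_eq_compl_union {α : Type*} {a : α} {C Y₁ Y₂ : Set α}
    (ha : {a} = Y₁ ∩ Y₂ᶜ) (haC : a ∈ C) (hCY : C ⊆ Y₁) : {a}ᶜ = Cᶜ ∪ Y₂ := by
  have ha_not_mem : a ∉ Y₂ := (ha.subset rfl).2
  refine Set.Subset.antisymm (fun x hxa ↦ ?_) ?_
  · by_contra hx
    rw [Set.mem_union, not_or, Set.notMem_compl_iff] at hx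
    exact hxa (ha.superset ⟨hCY hx.1, hx.2⟩)
  · rintro x (hxC | hxY) rfl
    exacts [hxC haC, ha_not_mem hxY]

theorem stmt0_general {X : Type*} [TopologicalSpace X] [CompactSpace X] [T0Space X]
    (hfin : {x : X | IsClosed ({x} : Set X)}.Finite)
    (M : X) (hM : IsClosed ({M} : Set X))
    (hwv : ∃ Y₁ Y₂ : Set X,
      IsThomason Y₁ ∧ StableUnderSpecialization Y₂ ∧ ({M} : Set X) = Y₁ ∩ Y₂ᶜ) :
    IsThomason ({M} : Set X) ∧ IsClosed ({M} : Set X) ∧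
      IsCompact (({M} : Set X)ᶜ) ∧ IsOpen (({M} : Set X)ᶜ) := by
  obtain ⟨Y₁, Y₂, hY₁, hY₂, hMY⟩ := hwv
  obtain ⟨C, hMC, hCY₁, hC⟩ := hY₁.exists_mem_subset_isCompact_compl (hMY.subset rfl).1
  have hY₂_compact : IsCompact Y₂ :=
    isCompact_of_stableUnderSpecialization_of_finite hY₂ (hfin.subset fun _ hx ↦ hx.2)
  have hM_compl : IsCompact ({M} : Set X)ᶜ := by
    rw [compl_singleton_eq_compl_union hMY hMC hCY₁]
    exact hC.union hY₂_compact
  exact ⟨isThomason_of_isClosed_of_isCompact_compl hM hM_compl, hM, hM_compl, hM.isOpen_compl⟩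

/-- In a spectral space with only finitely many closed points, every weakly visible
closed point `M` is visible; more precisely `{M}` is a Thomason subset: it is closed
and its complement is quasi-compact open. -/
theorem stmt0 {X : Type*} [TopologicalSpace X] (hX : IsSpectralSpace X)
    (hfin : {x : X | IsClosed ({x} : Set X)}.Finite)
    (M : X) (hM : IsClosed ({M} : Set X))
    (hwv : ∃ Y₁ Y₂ : Set X, IsThomason Y₁ ∧ IsThomason Y₂ ∧ ({M} : Set X) = Y₁ ∩ Y₂ᶜ) :
    IsThomason ({M} : Set X) ∧ IsClosed ({M} : Set X) ∧
      IsCompact (({M} : Set X)ᶜ) ∧ IsOpen (({M} : Set X)ᶜ) := by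
  obtain ⟨_, _, -⟩ := hX
  obtain ⟨Y₁, Y₂, hY₁, hY₂, hMY⟩ := hwv
  exact stmt0_general hfin M hM ⟨Y₁, Y₂, hY₁, hY₂.stableUnderSpecialization, hMY⟩
end

section
/- Let X be a spectral topological space. Let M ∈ X be a closed point such that X \ {M} is quasi-compact, and let C ⊆ X be a closed subset with quasi-compact complement such that gen(M) ∩ C = {M}. Then C \ {M} is a closed subset of X whose complement is quasi-compact; in particular, C is the disjoint union of the two closed Thomason subsets C \ {M} and {M}. -/
/-- The set of generalizations of a point: `gen x = {y | x ∈ closure {y}}`. -/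
def gen {X : Type*} [TopologicalSpace X] (x : X) : Set X := {y | x ∈ closure ({y} : Set X)}

/-!
In the constructible topology `X` is still quasi-compact, and a set is closed in `X` exactly when
it is constructibly closed and stable under specialization. Now `C` is constructibly closed and
`{M}` is constructibly open, so `C \ {M}` is constructibly closed. It is stable under
specialization because `M` is the only point of `C` specializing to `M`.
-/

open Topology

section ConstructibleTopology

variable {X : Type*} [TopologicalSpace X]

theorem constructibleTopology_le [PrespectralSpace X] :
    constructibleTopology X ≤ ‹TopologicalSpace X› :=
  (TopologicalSpace.generateFrom_anti Set.subset_union_left).trans_eq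
    PrespectralSpace.isTopologicalBasis.eq_generateFrom.symm

theorem isClosed_constructibleTopology_of_isOpen_of_isCompact {U : Set X}
    (hUo : IsOpen U) (hUc : IsCompact U) : IsClosed[constructibleTopology X] U := by
  rw [← @isOpen_compl_iff X U (constructibleTopology X)]
  exact IsCompact.isOpen_constructibleTopology_of_isClosed (by rwa [compl_compl])
    hUo.isClosed_compl

variable [CompactSpace X] [QuasiSober X] [PrespectralSpace X] [QuasiSeparatedSpace X]

theorem compactSpace_constructibleTopology : @CompactSpace X (constructibleTopology X) :=
  @Function.Surjective.compactSpace (WithConstructibleTopology X) X _ (constructibleTopology X) _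
    (WithTopology.continuous_ofTopology _) _ (WithTopology.ofTopology_surjective _)

theorem exists_specializes_of_mem_closure {Z : Set X} {x : X}
    (hZ : IsClosed[constructibleTopology X] Z) (hx : x ∈ closure Z) : ∃ z ∈ Z, z ⤳ x := by
  have hZc : @IsCompact X (constructibleTopology X) Z :=
    @IsClosed.isCompact X (constructibleTopology X) Z compactSpace_constructibleTopology hZ
  -- An ultrafilter on `Z` converging to `x` has a constructible limit `z ∈ Z`, which lies in every
  -- quasi-compact open neighbourhood of `x` because these are constructibly closed.
  obtain ⟨u, hZu, hux⟩ := mem_closure_iff_ultrafilter.1 hx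
  obtain ⟨z, hzZ, huz⟩ := (@isCompact_iff_ultrafilter_le_nhds' X (constructibleTopology X) Z).1
    hZc u hZu
  refine ⟨z, hzZ, PrespectralSpace.isTopologicalBasis.nhds_hasBasis.ge_iff.2 ?_⟩
  rintro U ⟨⟨hUo, hUc⟩, hxU⟩
  have hzU : z ∈ U := (@isClosed_iff_ultrafilter X U (constructibleTopology X)).1
    (isClosed_constructibleTopology_of_isOpen_of_isCompact hUo hUc) z u huz
    (hux (hUo.mem_nhds hxU))
  exact hUo.mem_nhds hzU

theorem isClosed_iff_isClosed_constructibleTopology_and_stableUnderSpecialization {Z : Set X} :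
    IsClosed Z ↔ IsClosed[constructibleTopology X] Z ∧ StableUnderSpecialization Z := by
  refine ⟨fun hZ ↦ ⟨hZ.mono constructibleTopology_le, hZ.stableUnderSpecialization⟩, ?_⟩
  rintro ⟨hZ, hZs⟩
  refine isClosed_of_closure_subset fun x hx ↦ ?_
  obtain ⟨z, hzZ, hzx⟩ := exists_specializes_of_mem_closure hZ hx
  exact hZs hzx hzZ

theorem isClosed_sdiff_of_isOpen_constructibleTopology {C D : Set X} (hC : IsClosed C)
    (hD : IsOpen[constructibleTopology X] D) (hCD : ∀ x ∈ C, ∀ y ∈ D, x ⤳ y → x ∈ D) :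
    IsClosed (C \ D) := by
  obtain ⟨hCcons, hCspec⟩ :=
    isClosed_iff_isClosed_constructibleTopology_and_stableUnderSpecialization.1 hC
  refine isClosed_iff_isClosed_constructibleTopology_and_stableUnderSpecialization.2
    ⟨@IsClosed.sdiff X C D (constructibleTopology X) hCcons hD, ?_⟩
  rintro x y hxy ⟨hxC, hxD⟩
  exact ⟨hCspec hxy hxC, fun hyD ↦ hxD (hCD x hxC y hyD hxy)⟩

end ConstructibleTopology

section

variable {X : Type*} [TopologicalSpace X]

theorem mem_gen_iff_specializes {x y : X} : y ∈ gen x ↔ y ⤳ x :=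
  specializes_iff_mem_closure.symm

theorem isThomason_of_isClosed_of_isCompact_compl_s1 {Y : Set X} (hY : IsClosed Y)
    (hYc : IsCompact Yᶜ) : IsThomason Y :=
  ⟨{Y}, by rintro _ rfl; exact ⟨hY, hYc⟩, (Set.sUnion_singleton Y).symm⟩

theorem compactSpace_of_isCompact_compl_singleton {x : X} (hx : IsCompact ({x} : Set X)ᶜ) :
    CompactSpace X :=
  ⟨Set.compl_union_self {x} ▸ hx.union isCompact_singleton⟩

theorem isCompact_compl_sdiff {C D : Set X} (hC : IsCompact Cᶜ) (hD : IsCompact D) :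
    IsCompact (C \ D)ᶜ := by
  rw [Set.sdiff_eq, Set.compl_inter, compl_compl]
  exact hC.union hD

theorem stmt1_general [QuasiSober X] [PrespectralSpace X] [QuasiSeparatedSpace X]
    {M : X} (hM : IsClosed ({M} : Set X)) (hMc : IsCompact (({M} : Set X)ᶜ))
    {C : Set X} (hC : IsClosed C) (hCc : IsCompact Cᶜ) (hgen : gen M ∩ C = {M}) :
    IsClosed (C \ {M}) ∧ IsCompact ((C \ {M})ᶜ) ∧
      C = (C \ {M}) ∪ {M} ∧ Disjoint (C \ {M}) ({M} : Set X) ∧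
      IsThomason (C \ {M}) ∧ IsThomason ({M} : Set X) := by
  have : CompactSpace X := compactSpace_of_isCompact_compl_singleton hMc
  have hMC : {M} ⊆ C := hgen ▸ Set.inter_subset_right
  have hclosed : IsClosed (C \ {M}) := by
    refine isClosed_sdiff_of_isOpen_constructibleTopology hC
      (hMc.isOpen_constructibleTopology_of_isClosed hM) ?_
    rintro x hxC _ rfl hxM
    exact hgen.subset ⟨mem_gen_iff_specializes.2 hxM, hxC⟩
  have hcompact : IsCompact (C \ {M})ᶜ := isCompact_compl_sdiff hCc isCompact_singleton
  exact ⟨hclosed, hcompact, (Set.sdiff_union_of_subset hMC).symm, Set.disjoint_sdiff_left,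
    isThomason_of_isClosed_of_isCompact_compl_s1 hclosed hcompact,
    isThomason_of_isClosed_of_isCompact_compl_s1 hM hMc⟩

end

/-- Let `X` be spectral, `M` a closed point with quasi-compact complement, and `C ⊆ X`
closed with quasi-compact complement such that `gen(M) ∩ C = {M}`. Then `C \ {M}` is
closed with quasi-compact complement; in particular `C` is the disjoint union of the
two closed Thomason subsets `C \ {M}` and `{M}`. -/
theorem stmt1 {X : Type*} [TopologicalSpace X] (hX : IsSpectralSpace X)
    (M : X) (hM : IsClosed ({M} : Set X)) (hMc : IsCompact (({M} : Set X)ᶜ))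
    (C : Set X) (hC : IsClosed C) (hCc : IsCompact Cᶜ)
    (hgen : gen M ∩ C = {M}) :
    IsClosed (C \ {M}) ∧ IsCompact ((C \ {M})ᶜ) ∧
      C = (C \ {M}) ∪ {M} ∧ Disjoint (C \ {M}) ({M} : Set X) ∧
      IsThomason (C \ {M}) ∧ IsThomason ({M} : Set X) := by
  obtain ⟨-, -, _, hbasis, hinter⟩ := hX
  have : PrespectralSpace X := ⟨hbasis⟩
  have : QuasiSeparatedSpace X := ⟨hinter⟩
  exact stmt1_general hM hMc hC hCc hgen
end
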